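/- Fix λ₀ ∈ ℂ and for each λ ∈ ℂ let K_λ be a parallel transport for D − λ. Suppose L : [0,β] → Matrix (Fin n) (Fin n) ℂ is differentiable with L(0) = 0 and A(x) L′(x) + (B(x) − λ₀·I) L(x) = K_{λ₀}(x) for all x ∈ [0,β], and suppose the map λ ↦ K_λ(β) is differentiable at λ₀ with derivative L(β). If M_{λ₀} := M + N K_{λ₀}(β) is invertible, then the function λ ↦ det(M + N K_λ(β)) is differentiable at λ₀ with derivative det(M_{λ₀}) · ∫₀^β tr( K_{λ₀}(x) · M_{λ₀}⁻¹ · N · K_{λ₀}(β) · K_{λ₀}(x)⁻¹ · A(x)⁻¹ ) dx. -/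

import Mathlib

/-!
Write `K = K_{λ₀}` and `M₀ = M + N K(β)`. The identity comes from two derivative computations.

* Variation of constants: `A L′ + (B − λ₀) L = K` and `A K′ + (B − λ₀) K = 0` give
  `(K⁻¹ L)′ = K⁻¹ A⁻¹ K` on `[0, β]`, so that `K(β)⁻¹ L(β) = ∫₀^β K⁻¹ A⁻¹ K` because `L(0) = 0`
  (`hasDerivWithinAt_inv_mul`; the integration is done after applying the functional
  `X ↦ tr(P X)`).
* Jacobi's formula `(det F)′ = tr(adj(F) F′)` (`hasDerivAt_det`), which for `F(λ) = M + N K_λ(β)`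
  yields `det(M₀) · tr(M₀⁻¹ N L(β))`.

Writing `L(β) = K(β) (K(β)⁻¹ L(β))`, taking `P = M₀⁻¹ N K(β)`, and using the cyclicity of the trace
under the integral gives the claim.
-/

open Set MeasureTheory

noncomputable section

/-- Jacobi's formula: `(det F)′ = tr(adj(F) F′)`. -/
theorem hasDerivAt_det {n : ℕ} (F : ℂ → Matrix (Fin n) (Fin n) ℂ)
    (F' : Matrix (Fin n) (Fin n) ℂ) (z : ℂ)
    (hF : ∀ i j, HasDerivAt (fun w => F w i j) (F' i j) z) :
    HasDerivAt (fun w => (F w).det) (Matrix.trace ((F z).adjugate * F')) z := by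
  have h1 : HasDerivAt (fun w => ∑ σ : Equiv.Perm (Fin n),
      ((Equiv.Perm.sign σ : ℤ) : ℂ) * ∏ i, F w (σ i) i)
      (∑ σ : Equiv.Perm (Fin n), ((Equiv.Perm.sign σ : ℤ) : ℂ) *
        ∑ i, (∏ j ∈ Finset.univ.erase i, F z (σ j) j) • F' (σ i) i) z :=
    HasDerivAt.fun_sum fun σ _ => (HasDerivAt.fun_finsetProd fun i _ => hF (σ i) i).const_mul _
  simp only [Matrix.det_apply']
  convert h1 using 1
  -- Both sides are the sum over `i` of the determinant of `F z` with column `i` replaced by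
  -- column `i` of `F'`.
  have h2 : ∀ i, ((F z).adjugate * F') i i = ((F z).updateCol i (fun k => F' k i)).det := by
    intro i
    rw [← Matrix.cramer_apply, Matrix.cramer_eq_adjugate_mulVec]
    rfl
  simp only [Matrix.trace, Matrix.diag_apply, h2, Matrix.det_apply', Finset.mul_sum]
  rw [Finset.sum_comm]
  refine Finset.sum_congr rfl fun σ _ => Finset.sum_congr rfl fun i _ => ?_
  rw [← Finset.prod_erase_mul _ _ (Finset.mem_univ i), smul_eq_mul, Matrix.updateCol_self]
  congr 2
  refine Finset.prod_congr rfl fun j hj => ?_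
  rw [Matrix.updateCol_ne (Finset.ne_of_mem_erase hj)]

open scoped Matrix.Norms.Operator in
/-- Variation of constants: if `K` solves `a K′ + b K = 0` and `L` solves `a L′ + b L = K` at `x`,
then `(K⁻¹ L)′ = K⁻¹ a⁻¹ K` there. -/
theorem hasDerivWithinAt_inv_mul {n : ℕ} {s : Set ℝ} {x : ℝ}
    {K L : ℝ → Matrix (Fin n) (Fin n) ℂ} {K' L' a b : Matrix (Fin n) (Fin n) ℂ}
    (hK : ∀ i j, HasDerivWithinAt (fun t => K t i j) (K' i j) s x)
    (hL : ∀ i j, HasDerivWithinAt (fun t => L t i j) (L' i j) s x)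
    (hKu : IsUnit (K x)) (ha : IsUnit a)
    (hKeq : a * K' + b * K x = 0) (hLeq : a * L' + b * L x = K x) (i j : Fin n) :
    HasDerivWithinAt (fun t => ((K t)⁻¹ * L t) i j) (((K x)⁻¹ * a⁻¹ * K x) i j) s x := by
  have hKm : HasDerivWithinAt K K' s x :=
    hasDerivWithinAt_pi.2 fun i => hasDerivWithinAt_pi.2 fun j => hK i j
  have hLm : HasDerivWithinAt L L' s x :=
    hasDerivWithinAt_pi.2 fun i => hasDerivWithinAt_pi.2 fun j => hL i j
  have hinv : HasDerivWithinAt (fun t => (K t)⁻¹) (-((K x)⁻¹ * K' * (K x)⁻¹)) s x := by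
    obtain ⟨u, hu⟩ := hKu
    have h := hasFDerivAt_ringInverse (𝕜 := ℝ) u
    rw [hu] at h
    have h' := h.comp_hasDerivWithinAt x hKm
    have e : (↑u⁻¹ : Matrix (Fin n) (Fin n) ℂ) = (K x)⁻¹ := by
      rw [← hu, Matrix.coe_units_inv]
    have hf : (fun t => (K t)⁻¹) = Ring.inverse ∘ K :=
      funext fun t => Matrix.nonsing_inv_eq_ringInverse (K t)
    have e2 : (-((ContinuousLinearMap.mulLeftRight ℝ (Matrix (Fin n) (Fin n) ℂ)) ↑u⁻¹) ↑u⁻¹) K'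
        = -((K x)⁻¹ * K' * (K x)⁻¹) := by
      rw [← e]
      simp
    rw [hf, ← e2]
    exact h'
  have hprod := hinv.mul hLm
  have key : -((K x)⁻¹ * K' * (K x)⁻¹) * L x + (K x)⁻¹ * L' = (K x)⁻¹ * a⁻¹ * K x := by
    have hKd := (Matrix.isUnit_iff_isUnit_det _).1 hKu
    have had := (Matrix.isUnit_iff_isUnit_det _).1 ha
    have hK1 : K' = -(a⁻¹ * (b * K x)) := by
      rw [← Matrix.nonsing_inv_mul_cancel_left _ K' had, eq_neg_of_add_eq_zero_left hKeq,
        Matrix.mul_neg]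
    have hL1 : L' = a⁻¹ * (K x - b * L x) := by
      rw [← Matrix.nonsing_inv_mul_cancel_left _ L' had, eq_sub_of_add_eq hLeq]
    have h3 : K x * ((K x)⁻¹ * L x) = L x := Matrix.mul_nonsing_inv_cancel_left _ _ hKd
    rw [hK1, hL1]
    simp only [Matrix.mul_neg, Matrix.neg_mul, neg_neg, Matrix.mul_sub, Matrix.mul_assoc, h3]
    abel
  rw [key] at hprod
  exact hasDerivWithinAt_pi.1 (hasDerivWithinAt_pi.1 hprod i) j

theorem continuousOn_matrix_inv {n : ℕ} {s : Set ℝ} {F : ℝ → Matrix (Fin n) (Fin n) ℂ}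
    (hF : ContinuousOn F s) (hu : ∀ x ∈ s, IsUnit (F x)) :
    ContinuousOn (fun x => (F x)⁻¹) s := by
  intro x hx
  have hd := (Matrix.isUnit_iff_isUnit_det _).1 (hu x hx)
  have hc : ContinuousAt Ring.inverse (F x).det := by
    rw [Ring.inverse_eq_inv']
    exact continuousAt_inv₀ hd.ne_zero
  exact (continuousAt_matrix_inv (F x) hc).comp_continuousWithinAt (hF x hx)

/-- Let `K_λ` be parallel transports for `D − λ`, let `L` solve
`A L′ + (B − λ₀I) L = K_{λ₀}` with `L(0) = 0`, and suppose `λ ↦ K_λ(β)` is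
differentiable at `λ₀` with derivative `L(β)`. If `M_{λ₀} = M + N K_{λ₀}(β)` is
invertible, then `λ ↦ det(M + N K_λ(β))` is differentiable at `λ₀` with derivative
`det(M_{λ₀}) · ∫₀^β tr(K_{λ₀}(x) M_{λ₀}⁻¹ N K_{λ₀}(β) K_{λ₀}(x)⁻¹ A(x)⁻¹) dx`. -/
theorem statement12
    (β : ℝ) (hβ : 0 < β) (n : ℕ) (hn : 1 ≤ n)
    (A B : ℝ → Matrix (Fin n) (Fin n) ℂ)
    (hA : ∀ i j, ContinuousOn (fun x => A x i j) (Icc (0:ℝ) β))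
    (hB : ∀ i j, ContinuousOn (fun x => B x i j) (Icc (0:ℝ) β))
    (hAinv : ∀ x ∈ Icc (0:ℝ) β, IsUnit (A x))
    (lam₀ : ℂ)
    (K K' : ℂ → ℝ → Matrix (Fin n) (Fin n) ℂ)
    (hK0 : ∀ lam : ℂ, K lam 0 = 1)
    (hKd : ∀ lam : ℂ, ∀ x ∈ Icc (0:ℝ) β, ∀ i j,
      HasDerivWithinAt (fun t => K lam t i j) (K' lam x i j) (Icc (0:ℝ) β) x)
    (hKeq : ∀ lam : ℂ, ∀ x ∈ Icc (0:ℝ) β,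
      A x * K' lam x + (B x - lam • (1 : Matrix (Fin n) (Fin n) ℂ)) * K lam x = 0)
    (hKinv : ∀ lam : ℂ, ∀ x ∈ Icc (0:ℝ) β, IsUnit (K lam x))
    (L L' : ℝ → Matrix (Fin n) (Fin n) ℂ)
    (hL0 : L 0 = 0)
    (hLd : ∀ x ∈ Icc (0:ℝ) β, ∀ i j,
      HasDerivWithinAt (fun t => L t i j) (L' x i j) (Icc (0:ℝ) β) x)
    (hLeq : ∀ x ∈ Icc (0:ℝ) β,
      A x * L' x + (B x - lam₀ • (1 : Matrix (Fin n) (Fin n) ℂ)) * L x = K lam₀ x)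
    (hKdiff : ∀ i j, HasDerivAt (fun lam : ℂ => K lam β i j) (L β i j) lam₀)
    (M N : Matrix (Fin n) (Fin n) ℂ)
    (hM : IsUnit (M + N * K lam₀ β)) :
    HasDerivAt (fun lam : ℂ => (M + N * K lam β).det)
      ((M + N * K lam₀ β).det *
        ∫ x in Icc (0:ℝ) β,
          Matrix.trace
            (K lam₀ x * (M + N * K lam₀ β)⁻¹ * N * K lam₀ β * (K lam₀ x)⁻¹ * (A x)⁻¹))
      lam₀ := by
  have hβ0 : (0:ℝ) ≤ β := hβ.le
  have hβm : β ∈ Icc (0:ℝ) β := ⟨hβ0, le_rfl⟩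
  have hdM := (Matrix.isUnit_iff_isUnit_det _).1 hM
  have hdK := (Matrix.isUnit_iff_isUnit_det _).1 (hKinv lam₀ β hβm)
  set M₀ := M + N * K lam₀ β with hM₀
  set P := M₀⁻¹ * N * K lam₀ β with hP
  have hjac : HasDerivAt (fun lam : ℂ => (M + N * K lam β).det)
      (Matrix.trace (M₀.adjugate * (N * L β))) lam₀ := by
    refine hasDerivAt_det (fun lam => M + N * K lam β) (N * L β) lam₀ fun i j => ?_
    simp only [Matrix.add_apply, Matrix.mul_apply]
    exact (HasDerivAt.fun_sum fun k _ => (hKdiff k j).const_mul (N i k)).const_add (M i j)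
  have hder : ∀ x ∈ Icc (0:ℝ) β,
      HasDerivWithinAt (fun t => Matrix.trace (P * ((K lam₀ t)⁻¹ * L t)))
        (Matrix.trace (P * ((K lam₀ x)⁻¹ * (A x)⁻¹ * K lam₀ x))) (Icc (0:ℝ) β) x := by
    intro x hx
    have h := hasDerivWithinAt_inv_mul (hKd lam₀ x hx) (hLd x hx) (hKinv lam₀ x hx)
      (hAinv x hx) (hKeq lam₀ x hx) (hLeq x hx)
    simp only [Matrix.trace, Matrix.diag_apply, Matrix.mul_apply (M := P)]
    exact HasDerivWithinAt.fun_sum fun i _ => HasDerivWithinAt.fun_sum fun j _ =>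
      (h j i).const_mul (P i j)
  have hKc : ContinuousOn (K lam₀) (Icc (0:ℝ) β) :=
    continuousOn_pi.2 fun i => continuousOn_pi.2 fun j x hx =>
      (hKd lam₀ x hx i j).continuousWithinAt
  have hAc : ContinuousOn A (Icc (0:ℝ) β) :=
    continuousOn_pi.2 fun i => continuousOn_pi.2 fun j => hA i j
  have hcont : ContinuousOn
      (fun x => Matrix.trace (P * ((K lam₀ x)⁻¹ * (A x)⁻¹ * K lam₀ x))) (Icc (0:ℝ) β) := by
    have h : ContinuousOn (fun x => P * ((K lam₀ x)⁻¹ * (A x)⁻¹ * K lam₀ x)) (Icc (0:ℝ) β) :=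
      continuousOn_const.mul (((continuousOn_matrix_inv hKc (hKinv lam₀)).mul
        (continuousOn_matrix_inv hAc hAinv)).mul hKc)
    exact (Continuous.matrix_trace continuous_id).comp_continuousOn h
  have hint : ∫ x in Icc (0:ℝ) β, Matrix.trace
      (K lam₀ x * M₀⁻¹ * N * K lam₀ β * (K lam₀ x)⁻¹ * (A x)⁻¹)
      = Matrix.trace (M₀⁻¹ * (N * L β)) := by
    have hcyc : ∀ x, Matrix.trace
        (K lam₀ x * M₀⁻¹ * N * K lam₀ β * (K lam₀ x)⁻¹ * (A x)⁻¹)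
        = Matrix.trace (P * ((K lam₀ x)⁻¹ * (A x)⁻¹ * K lam₀ x)) := by
      intro x
      rw [← Matrix.mul_assoc P, Matrix.trace_mul_comm _ (K lam₀ x)]
      simp only [hP, Matrix.mul_assoc]
    simp only [hcyc]
    rw [integral_Icc_eq_integral_Ioc, ← intervalIntegral.integral_of_le hβ0,
      intervalIntegral.integral_eq_sub_of_hasDerivAt_of_le hβ0
        (fun x hx => (hder x hx).continuousWithinAt)
        (fun x hx => (hder x (Ioo_subset_Icc_self hx)).hasDerivAt (Icc_mem_nhds hx.1 hx.2))
        (hcont.intervalIntegrable_of_Icc hβ0), hL0]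
    simp only [Matrix.mul_zero, Matrix.trace_zero, sub_zero, hP, Matrix.mul_assoc,
      Matrix.mul_nonsing_inv_cancel_left _ _ hdK]
  rw [hint]
  convert hjac using 1
  rw [Matrix.inv_def, Matrix.smul_mul, Matrix.trace_smul, smul_eq_mul, ← mul_assoc,
    Ring.mul_inverse_cancel _ hdM, one_mul]
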